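/- arXiv:1805.09956 — 6 statements merged into one kernel-verified Lean document; each statement's English description precedes it below -/
import Mathlib

section
/- Let η ≥ 2 and ρ ≥ 1 be integers, set d_h = η^{ρ−h+3} for 1 ≤ h ≤ ρ, and let ℓ' be a positive integral multiple of d₁ = η^{ρ+2}. Let G̃ be the ℓ'×ℓ' grid. Then there exist 4^ρ hierarchical systems of squares H̃₁,…,H̃_{4^ρ} of G̃ such that every vertex of G̃ belongs to exactly one of them. -/
/-!
For each level `h`, cut `{1, …, W}` into consecutive blocks of length `d_h = η ^ (ρ - h + 3)`.
Since `d_h` divides `d_{h-1}` and all of them divide `W`, the level-`h` blocks refine the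
level-`(h-1)` blocks. Two distinct level-`h` blocks with indices of equal parity are
`d_h`-separated (`blockFam_canonical`). A string `a` of `ρ` parities therefore selects a nested
sequence of canonical interval families, namely the blocks all of whose ancestors have the
prescribed parities (`blockFam_nested`), and each point is covered at the last level by exactly
one string, the one formed by the parities of the blocks containing it (`mem_blockFam_iff`).
Pairs of strings, one for each coordinate, give the `2 ^ ρ * 2 ^ ρ = 4 ^ ρ` systems of squares.
-/

open Finset

abbrev Vtx := ℕ × ℕ
abbrev DPair := Vtx × Vtx

/-- The grid graph on rows `r₁..r₂` and columns `c₁..c₂` (vertices outside are isolated). -/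
def rectGrid (r₁ r₂ c₁ c₂ : ℕ) : SimpleGraph Vtx :=
  SimpleGraph.fromRel (fun u v =>
    r₁ ≤ u.1 ∧ u.1 ≤ r₂ ∧ c₁ ≤ u.2 ∧ u.2 ≤ c₂ ∧
    r₁ ≤ v.1 ∧ v.1 ≤ r₂ ∧ c₁ ≤ v.2 ∧ v.2 ≤ c₂ ∧
    ((u.1 = v.1 ∧ u.2 + 1 = v.2) ∨ (u.2 = v.2 ∧ u.1 + 1 = v.1)))

/-- The ℓ×ℓ grid graph. -/
def gridG (ℓ : ℕ) : SimpleGraph Vtx := rectGrid 1 ℓ 1 ℓ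

/-- The demand pairs of `M` can be simultaneously routed via node-disjoint paths in `G`. -/
def NodeDisjointRoutable {V : Type*} (G : SimpleGraph V) (M : Finset (V × V)) : Prop :=
  ∃ P : ∀ m : {m // m ∈ M}, G.Walk m.val.1 m.val.2,
    (∀ m, (P m).IsPath) ∧
    ∀ m m' : {m // m ∈ M}, m ≠ m' → ∀ x, x ∈ (P m).support → x ∉ (P m').support

def OnTopRow (ℓ : ℕ) (v : Vtx) : Prop := v.1 = 1 ∧ 1 ≤ v.2 ∧ v.2 ≤ ℓ

def OnBoundary (ℓ : ℕ) (v : Vtx) : Prop :=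
  1 ≤ v.1 ∧ v.1 ≤ ℓ ∧ 1 ≤ v.2 ∧ v.2 ≤ ℓ ∧ (v.1 = 1 ∨ v.1 = ℓ ∨ v.2 = 1 ∨ v.2 = ℓ)

def DistinctSources (M : Finset DPair) : Prop := ∀ m ∈ M, ∀ m' ∈ M, m.1 = m'.1 → m = m'
def DistinctDests (M : Finset DPair) : Prop := ∀ m ∈ M, ∀ m' ∈ M, m.2 = m'.2 → m = m'

noncomputable def lg (n : ℕ) : ℝ := Real.logb 2 n

def IsIntervalIn (W : ℕ) (I : Finset ℕ) : Prop :=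
  ∃ a b : ℕ, 1 ≤ a ∧ a ≤ b ∧ b ≤ W ∧ I = Finset.Icc a b

def IntSeparated (d : ℕ) (I J : Finset ℕ) : Prop :=
  ∀ i ∈ I, ∀ j ∈ J, (d : ℤ) < |(i : ℤ) - (j : ℤ)|

def IsCanonicalIntervals (W d : ℕ) (Is : Finset (Finset ℕ)) : Prop :=
  (∀ I ∈ Is, IsIntervalIn W I ∧ I.card = d) ∧
    ∀ I ∈ Is, ∀ J ∈ Is, I ≠ J → IntSeparated d I J

abbrev SquareSpec := Finset ℕ × Finset ℕ

def memSquare (v : Vtx) (Q : SquareSpec) : Prop := v.1 ∈ Q.1 ∧ v.2 ∈ Q.2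

instance (v : Vtx) (Q : SquareSpec) : Decidable (memSquare v Q) := by
  unfold memSquare; infer_instance

def IsCanonicalSquares (W d : ℕ) (Qs : Finset SquareSpec) : Prop :=
  ∃ I₁ I₂ : Finset (Finset ℕ),
    IsCanonicalIntervals W d I₁ ∧ IsCanonicalIntervals W d I₂ ∧ Qs = I₁ ×ˢ I₂

/-- The number of sources of `M` lying on the shadow of the square `Q` with respect to `M`,
i.e. on the shortest sub-path of the top row containing all sources of pairs of `M` whose
destination lies in `Q`. -/
def shadowCount (M : Finset DPair) (Q : SquareSpec) : ℕ :=
  (M.filter (fun m => ∃ m₁ ∈ M, memSquare m₁.2 Q ∧ ∃ m₂ ∈ M, memSquare m₂.2 Q ∧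
      m₁.1.2 ≤ m.1.2 ∧ m.1.2 ≤ m₂.1.2)).card

/-- The square `Q` (of side `d`) has the β-shadow property with respect to `M`. -/
def HasShadowProp (β : ℝ) (d : ℕ) (M : Finset DPair) (Q : SquareSpec) : Prop :=
  (shadowCount M Q : ℝ) ≤ β * d

/-- A hierarchical system of squares `Qs 1, …, Qs ρ`: level `h` is a `d_h`-canonical family
of squares of the ℓ'×ℓ' grid (with `d_h = η^(ρ-h+3)`), and every level-`h` square is
contained in a level-`(h-1)` square. -/
def IsHierSquares (W η ρ : ℕ) (Qs : ℕ → Finset SquareSpec) : Prop :=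
  (∀ h, 1 ≤ h → h ≤ ρ → IsCanonicalSquares W (η ^ (ρ - h + 3)) (Qs h)) ∧
    ∀ h, 1 < h → h ≤ ρ → ∀ Q ∈ Qs h, ∃ Q' ∈ Qs (h - 1), Q.1 ⊆ Q'.1 ∧ Q.2 ⊆ Q'.2

/-- The side length `η ^ (ρ - h + 3)` of the squares of level `h`. -/
def sideLen (η ρ h : ℕ) : ℕ := η ^ (ρ - h + 3)

/-- The one-dimensional level-`h` family of colour string `a`: blocks `(k * d, (k + 1) * d]` of
length `d = sideLen η ρ h` whose ancestor block at every level `j + 1 ≤ h` has an index of the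
parity prescribed by `a j`. Blocks are indexed from `0`, and `k * d / sideLen η ρ (j + 1)` is the
index of the level-`(j + 1)` block containing the `k`-th level-`h` block. -/
def blockFam (W η ρ : ℕ) (a : Fin ρ → Bool) (h : ℕ) : Finset (Finset ℕ) :=
  ((range (W / sideLen η ρ h)).filter (fun k => ∀ j : Fin ρ, (j : ℕ) + 1 ≤ h →
      decide (k * sideLen η ρ h / sideLen η ρ (j + 1) % 2 = 1) = a j)).image
    (fun k => Icc (k * sideLen η ρ h + 1) ((k + 1) * sideLen η ρ h))

lemma sideLen_pos {η : ℕ} (hη : 2 ≤ η) (ρ h : ℕ) : 0 < sideLen η ρ h :=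
  Nat.pow_pos (by omega)

lemma sideLen_eq_mul (η : ℕ) {ρ g h : ℕ} (hgh : g ≤ h) (hh : h ≤ ρ) :
    sideLen η ρ g = sideLen η ρ h * η ^ (h - g) := by
  unfold sideLen
  rw [← pow_add]
  congr 1
  omega

lemma sideLen_dvd {η ρ W h : ℕ} (h1 : 1 ≤ h) (hh : h ≤ ρ) (hdvd : η ^ (ρ + 2) ∣ W) :
    sideLen η ρ h ∣ W :=
  (pow_dvd_pow η (by omega)).trans hdvd

/-- Two blocks of the same level whose indices have the same parity are separated by at least one
whole block, hence `d`-separated. -/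
lemma blockFam_canonical {W η ρ h : ℕ} (hη : 2 ≤ η) (a : Fin ρ → Bool) (h1 : 1 ≤ h)
    (hh : h ≤ ρ) : IsCanonicalIntervals W (sideLen η ρ h) (blockFam W η ρ a h) := by
  have hd := sideLen_pos hη ρ h
  have par : ∀ k : ℕ, (∀ j : Fin ρ, (j : ℕ) + 1 ≤ h →
      decide (k * sideLen η ρ h / sideLen η ρ (j + 1) % 2 = 1) = a j) →
      decide (k % 2 = 1) = a ⟨h - 1, by omega⟩ := by
    intro k hk
    have := hk ⟨h - 1, by omega⟩ (by simp only; omega)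
    simp only [Nat.sub_add_cancel h1] at this
    rwa [Nat.mul_div_cancel _ hd] at this
  constructor
  · intro I hI
    simp only [blockFam, mem_image, mem_filter, mem_range] at hI
    obtain ⟨k, ⟨hk, -⟩, rfl⟩ := hI
    refine ⟨⟨_, _, by omega, ?_, ?_, rfl⟩, ?_⟩
    · rw [Nat.succ_mul]; omega
    · exact (Nat.mul_le_mul_right _ hk).trans (Nat.div_mul_le_self _ _)
    · rw [Nat.card_Icc, Nat.succ_mul]; omega
  · intro I hI J hJ hne i hi j hj
    simp only [blockFam, mem_image, mem_filter, mem_range] at hI hJ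
    obtain ⟨k, ⟨-, hk⟩, rfl⟩ := hI
    obtain ⟨l, ⟨-, hl⟩, rfl⟩ := hJ
    have hkl : k ≠ l := by rintro rfl; exact hne rfl
    have hp : (k % 2 = 1) ↔ (l % 2 = 1) := by
      have := (par k hk).trans (par l hl).symm
      simpa using this
    rw [mem_Icc] at hi hj
    rcases lt_or_gt_of_ne hkl with hlt | hlt
    · have hge : (k + 2) * sideLen η ρ h ≤ l * sideLen η ρ h :=
        Nat.mul_le_mul_right _ (by omega)
      rw [lt_abs]; right
      simp only [Nat.add_mul] at hi hj hge
      omega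
    · have hge : (l + 2) * sideLen η ρ h ≤ k * sideLen η ρ h :=
        Nat.mul_le_mul_right _ (by omega)
      rw [lt_abs]; left
      simp only [Nat.add_mul] at hi hj hge
      omega

/-- The level-`h` block of index `k` lies in the level-`(h - 1)` block of index `k / η`, which has
the same ancestors and so satisfies the same colour constraints. -/
lemma blockFam_nested {W η ρ h : ℕ} (hη : 2 ≤ η) (hdvd : η ^ (ρ + 2) ∣ W) (a : Fin ρ → Bool)
    (h1 : 1 < h) (hh : h ≤ ρ) {I : Finset ℕ} (hI : I ∈ blockFam W η ρ a h) :
    ∃ J ∈ blockFam W η ρ a (h - 1), I ⊆ J := by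
  have hd := sideLen_pos hη ρ h
  have hpd : sideLen η ρ (h - 1) = sideLen η ρ h * η := by
    rw [sideLen_eq_mul η (show h - 1 ≤ h by omega) hh, show h - (h - 1) = 1 by omega, pow_one]
  have hdvd' : sideLen η ρ h * η ∣ W := hpd ▸ sideLen_dvd (by omega) (by omega) hdvd
  simp only [blockFam, mem_image, mem_filter, mem_range] at hI
  obtain ⟨k, ⟨hk, hc⟩, rfl⟩ := hI
  refine ⟨_, mem_image.2 ⟨k / η, mem_filter.2 ⟨mem_range.2 ?_, ?_⟩, rfl⟩, ?_⟩
  · rw [hpd]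
    obtain ⟨c, rfl⟩ := hdvd'
    rw [mul_assoc, Nat.mul_div_cancel_left _ hd] at hk
    rw [Nat.mul_div_cancel_left _ (by positivity)]
    exact Nat.div_lt_of_lt_mul hk
  · intro j hj
    rw [← hc j (by omega)]
    have e1 := sideLen_eq_mul η hj (show h - 1 ≤ ρ by omega)
    have e : k / η * sideLen η ρ (h - 1) / sideLen η ρ (j + 1)
        = k * sideLen η ρ h / sideLen η ρ (j + 1) := by
      rw [e1, ← Nat.div_div_eq_div_mul, ← Nat.div_div_eq_div_mul,
        Nat.mul_div_cancel _ (sideLen_pos hη _ _), hpd, ← Nat.div_div_eq_div_mul,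
        Nat.mul_div_cancel _ hd]
    rw [e]
  · rw [hpd]
    apply Icc_subset_Icc
    · have := Nat.mul_le_mul_right (sideLen η ρ h) (Nat.div_mul_le_self k η)
      nlinarith
    · have : k + 1 ≤ (k / η + 1) * η := by
        have := Nat.lt_mul_div_succ k (show 0 < η by omega)
        rw [mul_comm]; omega
      have := Nat.mul_le_mul_right (sideLen η ρ h) this
      nlinarith

/-- A point is covered by the last level of exactly one colour string: the string recording, for
every level, the parity of the index of the block containing the point. -/
lemma mem_blockFam_iff {W η ρ : ℕ} (hη : 2 ≤ η) (hρ : 1 ≤ ρ) (hdvd : η ^ (ρ + 2) ∣ W)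
    (a : Fin ρ → Bool) {x : ℕ} (hx : 1 ≤ x) (hxW : x ≤ W) :
    (∃ I ∈ blockFam W η ρ a ρ, x ∈ I) ↔
      a = fun j : Fin ρ => decide ((x - 1) / sideLen η ρ (j + 1) % 2 = 1) := by
  have hd := sideLen_pos hη ρ ρ
  have key : ∀ j : Fin ρ, (x - 1) / sideLen η ρ ρ * sideLen η ρ ρ / sideLen η ρ (j + 1)
      = (x - 1) / sideLen η ρ (j + 1) := by
    intro j
    rw [sideLen_eq_mul η (show (j : ℕ) + 1 ≤ ρ from j.2) le_rfl, ← Nat.div_div_eq_div_mul,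
      ← Nat.div_div_eq_div_mul, Nat.mul_div_cancel _ hd]
  constructor
  · rintro ⟨I, hI, hxI⟩
    simp only [blockFam, mem_image, mem_filter, mem_range] at hI
    obtain ⟨k, ⟨-, hc⟩, rfl⟩ := hI
    rw [mem_Icc] at hxI
    have hk : (x - 1) / sideLen η ρ ρ = k :=
      Nat.div_eq_of_lt_le (by omega) (by omega)
    funext j
    rw [← hc j j.2, ← key j, hk]
  · rintro rfl
    refine ⟨_, mem_image.2 ⟨(x - 1) / sideLen η ρ ρ, mem_filter.2 ⟨mem_range.2 ?_, ?_⟩, rfl⟩, ?_⟩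
    · exact Nat.div_lt_div_of_lt_of_dvd (sideLen_dvd hρ le_rfl hdvd) (by omega)
    · intro j _
      rw [key j]
    · rw [mem_Icc]
      have h1 := Nat.div_mul_le_self (x - 1) (sideLen η ρ ρ)
      have h2 := Nat.lt_mul_div_succ (x - 1) hd
      rw [mul_comm] at h2
      omega

/-- Claim: hierarchical systems of squares covering the grid.
There are `4^ρ` hierarchical systems of squares of the ℓ'×ℓ' grid such that every vertex of
the grid belongs (i.e. lies in a level-ρ square) to exactly one of them. -/
theorem statement7
    (η ρ W : ℕ) (hη : 2 ≤ η) (hρ : 1 ≤ ρ) (hW : 0 < W)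
    (hdvd : η ^ (ρ + 2) ∣ W) :
    ∃ H : Fin (4 ^ ρ) → ℕ → Finset SquareSpec,
      (∀ i, IsHierSquares W η ρ (H i)) ∧
      ∀ v : Vtx, 1 ≤ v.1 → v.1 ≤ W → 1 ≤ v.2 → v.2 ≤ W →
        ∃! i : Fin (4 ^ ρ), ∃ Q ∈ (H i) ρ, memSquare v Q := by
  have hcard : Fintype.card (Fin (4 ^ ρ)) =
      Fintype.card ((Fin ρ → Bool) × (Fin ρ → Bool)) := by
    simp [← mul_pow]
  let e := Fintype.equivOfCardEq hcard
  refine ⟨fun i h => blockFam W η ρ (e i).1 h ×ˢ blockFam W η ρ (e i).2 h, ?_, ?_⟩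
  · intro i
    refine ⟨fun h h1 hh => ⟨_, _, blockFam_canonical hη _ h1 hh, blockFam_canonical hη _ h1 hh,
      rfl⟩, fun h h1 hh Q hQ => ?_⟩
    rw [mem_product] at hQ
    obtain ⟨J₁, hJ₁, hs₁⟩ := blockFam_nested hη hdvd _ h1 hh hQ.1
    obtain ⟨J₂, hJ₂, hs₂⟩ := blockFam_nested hη hdvd _ h1 hh hQ.2
    exact ⟨(J₁, J₂), mem_product.2 ⟨hJ₁, hJ₂⟩, hs₁, hs₂⟩
  · intro v h1 h2 h3 h4
    have hiff : ∀ i, (∃ Q ∈ blockFam W η ρ (e i).1 ρ ×ˢ blockFam W η ρ (e i).2 ρ,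
        memSquare v Q) ↔ e i =
          (fun j : Fin ρ => decide ((v.1 - 1) / sideLen η ρ (j + 1) % 2 = 1),
           fun j : Fin ρ => decide ((v.2 - 1) / sideLen η ρ (j + 1) % 2 = 1)) := by
      intro i
      rw [Prod.ext_iff, ← mem_blockFam_iff hη hρ hdvd _ h1 h2,
        ← mem_blockFam_iff hη hρ hdvd _ h3 h4]
      constructor
      · rintro ⟨Q, hQ, hv⟩
        rw [mem_product] at hQ
        exact ⟨⟨_, hQ.1, hv.1⟩, ⟨_, hQ.2, hv.2⟩⟩
      · rintro ⟨⟨I, hI, hvI⟩, ⟨J, hJ, hvJ⟩⟩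
        exact ⟨(I, J), mem_product.2 ⟨hI, hJ⟩, hvI, hvJ⟩
    simp only [hiff]
    exact e.bijective.existsUnique _
end

section
/- Let η ≥ 2 and ρ ≥ 1 be integers, set d_h = η^{ρ−h+3} for 1 ≤ h ≤ ρ, and let ℓ' be a positive integral multiple of d₁ = η^{ρ+2}. Then there exist 2^ρ ρ-hierarchical systems of intervals H₁,…,H_{2^ρ} of [ℓ'] such that every integer in [ℓ'] belongs to exactly one of them. -/
/-!
Cut `[W]` into consecutive blocks of length `d_h = η^(ρ-h+3)` for each level `h`, numbered from `0`.
The block decompositions refine each other: block `k` of level `h` lies in block `k / η^(h-h')` of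
level `h' ≤ h`. Two distinct blocks of level `h` whose numbers have the same parity have a whole
block between them, so they are `d_h`-separated. For a number `i < 2^ρ`, the system `hierSystem i`
keeps at level `h` those blocks all of whose ancestors at levels `h' = 1, …, h` (itself included)
have the parity prescribed by bit `h' - 1` of `i`. Every `x ∈ [W]` lies in exactly one block of
level `ρ`, and the parities of the ancestors of this block spell out the binary expansion of the
only `i` whose system contains `x`.
-/

open Finset

/-- A ρ-hierarchical system of intervals of `[W]`: for every level `1 ≤ h ≤ ρ`, `Is h` is a
`d_h`-canonical family of intervals (with `d_h = η^(ρ-h+3)`), and every level-`h` interval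
is contained in a level-`(h-1)` interval. -/
def IsHierIntervals (W η ρ : ℕ) (Is : ℕ → Finset (Finset ℕ)) : Prop :=
  (∀ h, 1 ≤ h → h ≤ ρ → IsCanonicalIntervals W (η ^ (ρ - h + 3)) (Is h)) ∧
    ∀ h, 1 < h → h ≤ ρ → ∀ I ∈ Is h, ∃ I' ∈ Is (h - 1), I ⊆ I'

/-- The `k`-th block (`k ≥ 0`) of length `d` in the partition of the positive integers into
consecutive blocks of length `d`. -/
def blockIcc (d k : ℕ) : Finset ℕ := Finset.Icc (k * d + 1) (k * d + d)

/-- Block `k` of level `h` is admissible for `i` if its ancestor at each level `1 ≤ h' ≤ h` has odd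
number exactly when bit `h' - 1` of `i` is set. -/
def AncestorParity (η i h k : ℕ) : Prop :=
  ∀ h', 1 ≤ h' → h' ≤ h → (k / η ^ (h - h') % 2 = 1 ↔ i.testBit (h' - 1) = true)

open Classical in
/-- The hierarchical system attached to the bit pattern of `i`: at level `h`, the admissible blocks
of length `η ^ (ρ - h + 3)` contained in `[W]`. -/
noncomputable def hierSystem (W η ρ i h : ℕ) : Finset (Finset ℕ) :=
  ((Finset.range (W / η ^ (ρ - h + 3))).filter (AncestorParity η i h)).image
    (blockIcc (η ^ (ρ - h + 3)))

theorem mem_hierSystem {W η ρ i h : ℕ} {I : Finset ℕ} :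
    I ∈ hierSystem W η ρ i h ↔
      ∃ k, k < W / η ^ (ρ - h + 3) ∧ AncestorParity η i h k ∧
        blockIcc (η ^ (ρ - h + 3)) k = I := by
  simp [hierSystem, and_assoc]

theorem isIntervalIn_blockIcc {W d k : ℕ} (hd : 0 < d) (hk : k < W / d) :
    IsIntervalIn W (blockIcc d k) := by
  refine ⟨k * d + 1, k * d + d, by omega, by omega, ?_, rfl⟩
  calc k * d + d = (k + 1) * d := by ring
    _ ≤ W / d * d := Nat.mul_le_mul_right d hk
    _ ≤ W := Nat.div_mul_le_self W d

theorem card_blockIcc (d k : ℕ) : (blockIcc d k).card = d := by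
  simp [blockIcc]

theorem intSeparated_blockIcc_of_add_two_le {d k l : ℕ} (h : k + 2 ≤ l) {i j : ℕ}
    (hi : i ∈ blockIcc d k) (hj : j ∈ blockIcc d l) : i + d < j := by
  simp only [blockIcc, Finset.mem_Icc] at hi hj
  have : (k + 2) * d ≤ l * d := Nat.mul_le_mul_right d h
  rw [Nat.add_mul] at this
  omega

/-- Distinct blocks with numbers of equal parity are separated, since their numbers differ by at
least two. -/
theorem intSeparated_blockIcc {d k l : ℕ} (hne : k ≠ l) (hpar : k % 2 = 1 ↔ l % 2 = 1) :
    IntSeparated d (blockIcc d k) (blockIcc d l) := by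
  intro i hi j hj
  rw [lt_abs]
  rcases Nat.lt_or_gt_of_ne hne with h | h
  · have := intSeparated_blockIcc_of_add_two_le (show k + 2 ≤ l by omega) hi hj
    omega
  · have := intSeparated_blockIcc_of_add_two_le (show l + 2 ≤ k by omega) hj hi
    omega

theorem blockIcc_subset_blockIcc_div (d k : ℕ) {η : ℕ} (hη : 0 < η) :
    blockIcc d k ⊆ blockIcc (d * η) (k / η) := by
  apply Finset.Icc_subset_Icc
  · have : k / η * η * d ≤ k * d := Nat.mul_le_mul_right d (Nat.div_mul_le_self k η)
    calc k / η * (d * η) + 1 = k / η * η * d + 1 := by ring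
      _ ≤ k * d + 1 := by omega
  · have h1 : k + 1 ≤ (k / η + 1) * η := Nat.lt_mul_of_div_lt (Nat.lt_succ_self _) hη
    calc k * d + d = (k + 1) * d := by ring
      _ ≤ (k / η + 1) * η * d := Nat.mul_le_mul_right d h1
      _ = k / η * (d * η) + d * η := by ring

theorem mem_blockIcc {d k x : ℕ} (hd : 0 < d) (hx : 1 ≤ x) :
    x ∈ blockIcc d k ↔ (x - 1) / d = k := by
  rw [Nat.div_eq_iff hd, blockIcc, Finset.mem_Icc]
  omega

theorem isHierIntervals_hierSystem {W η ρ : ℕ} (hη : 2 ≤ η) (hdvd : η ^ (ρ + 2) ∣ W) (i : ℕ) :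
    IsHierIntervals W η ρ (hierSystem W η ρ i) := by
  have hη0 : 0 < η := by omega
  refine ⟨fun h h1 hρ => ⟨?_, ?_⟩, ?_⟩
  · intro I hI
    obtain ⟨k, hk, -, rfl⟩ := mem_hierSystem.1 hI
    exact ⟨isIntervalIn_blockIcc (by positivity) hk, card_blockIcc _ _⟩
  · intro I hI J hJ hne
    obtain ⟨k, -, hk, rfl⟩ := mem_hierSystem.1 hI
    obtain ⟨l, -, hl, rfl⟩ := mem_hierSystem.1 hJ
    refine intSeparated_blockIcc (fun e => hne (by rw [e])) ?_
    simpa using (hk h h1 le_rfl).trans (hl h h1 le_rfl).symm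
  · intro h h1 hρ I hI
    obtain ⟨k, hk, hpar, rfl⟩ := mem_hierSystem.1 hI
    have hpow : η ^ (ρ - (h - 1) + 3) = η ^ (ρ - h + 3) * η := by
      rw [← pow_succ]
      congr 1
      omega
    refine ⟨_, mem_hierSystem.2 ⟨k / η, ?_, ?_, rfl⟩, ?_⟩
    -- divisibility of `W` ensures that the parent of a block inside `[W]` is also inside `[W]`
    · have hd : η ^ (ρ - h + 3) * η ∣ W := by
        rw [← hpow]
        exact (pow_dvd_pow η (by omega)).trans hdvd
      rw [hpow]
      obtain ⟨m, rfl⟩ := hd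
      rw [Nat.mul_div_cancel_left m (by positivity)]
      rw [Nat.mul_assoc, Nat.mul_div_cancel_left _ (by positivity)] at hk
      exact Nat.div_lt_of_lt_mul hk
    · intro h' h1' hh'
      rw [Nat.div_div_eq_div_mul, ← pow_succ', show h - 1 - h' + 1 = h - h' by omega]
      exact hpar h' h1' (by omega)
    · rw [hpow]
      exact blockIcc_subset_blockIcc_div _ _ hη0

/-- Each block number `k` of level `ρ` is admissible for exactly one `i < 2 ^ ρ`, the one whose bits
are the parities of the ancestors of `k`. -/
theorem existsUnique_ancestorParity (η ρ k : ℕ) :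
    ∃! i : Fin (2 ^ ρ), AncestorParity η i ρ k := by
  let f : Fin ρ → Bool := fun j => decide (k / η ^ (ρ - (j + 1)) % 2 = 1)
  refine ⟨⟨Nat.ofBits f, Nat.ofBits_lt_two_pow f⟩, ?_, ?_⟩
  · intro h h1 hρ
    simp only
    rw [Nat.testBit_ofBits_lt f (h - 1) (by omega)]
    simp [f, show h - 1 + 1 = h by omega]
  · intro i hi
    apply Fin.ext
    apply Nat.eq_of_testBit_eq
    intro j
    by_cases hj : j < ρ
    · have := hi (j + 1) (by omega) (by omega)
      simp only [Nat.add_sub_cancel] at this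
      simp only
      rw [Nat.testBit_ofBits_lt f j hj, Bool.eq_iff_iff, ← this]
      simp [f]
    · have hlt : (2 : ℕ) ^ ρ ≤ 2 ^ j := Nat.pow_le_pow_right (by omega) (by omega)
      simp only
      rw [Nat.testBit_lt_two_pow (i.2.trans_le hlt),
        Nat.testBit_lt_two_pow ((Nat.ofBits_lt_two_pow f).trans_le hlt)]

/-- Observation: canonical hierarchical systems of intervals.
There are `2^ρ` ρ-hierarchical systems of intervals of `[ℓ']` such that every integer of
`[ℓ']` belongs (i.e. lies in a level-ρ interval) to exactly one of them. -/
theorem statement8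
    (η ρ W : ℕ) (hη : 2 ≤ η) (hρ : 1 ≤ ρ) (hW : 0 < W)
    (hdvd : η ^ (ρ + 2) ∣ W) :
    ∃ H : Fin (2 ^ ρ) → ℕ → Finset (Finset ℕ),
      (∀ i, IsHierIntervals W η ρ (H i)) ∧
      ∀ x : ℕ, 1 ≤ x → x ≤ W →
        ∃! i : Fin (2 ^ ρ), ∃ I ∈ (H i) ρ, x ∈ I := by
  have hd : 0 < η ^ (ρ - ρ + 3) := by positivity
  refine ⟨fun i => hierSystem W η ρ i, fun i => isHierIntervals_hierSystem hη hdvd i, ?_⟩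
  intro x hx1 hxW
  have hdW : η ^ (ρ - ρ + 3) ∣ W := (pow_dvd_pow η (by omega)).trans hdvd
  have key : ∀ i : Fin (2 ^ ρ), (∃ I ∈ hierSystem W η ρ i ρ, x ∈ I) ↔
      AncestorParity η i ρ ((x - 1) / η ^ (ρ - ρ + 3)) := by
    intro i
    constructor
    · rintro ⟨I, hI, hx⟩
      obtain ⟨k, -, hpar, rfl⟩ := mem_hierSystem.1 hI
      rwa [(mem_blockIcc hd hx1).1 hx]
    · intro hpar
      exact ⟨_, mem_hierSystem.2 ⟨_, Nat.div_lt_div_of_lt_of_dvd hdW (by omega), hpar, rfl⟩,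
        (mem_blockIcc hd hx1).2 rfl⟩
  simp only [key]
  exact existsUnique_ancestorParity η ρ _
end

section
/- Let F be a directed forest with n ≥ 2 vertices. Then there exists a partition {Y₁,…,Y_{⌈log₂ n⌉}} of the vertex set of F into at most ⌈log₂ n⌉ (possibly empty) parts such that for each j: the induced sub-digraph F[Y_j] is a vertex-disjoint union of directed paths, and moreover, for all v, v' ∈ Y_j such that F contains a directed path from v to v', the vertices v and v' lie on the same directed path of F[Y_j]. -/
/-!
Write `s v` for the number of vertices from which `v` can be reached (`v` included), and label
`v` by `⌊log₂ (s v + 1)⌋ - 1`.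

If two distinct children `a`, `a'` of `b` had the same label `k` as `b`, then
`s a, s a' ≥ 2 ^ (k + 1) - 1`; the two subtrees are disjoint and miss `b`, so
`s b + 1 ≥ s a + s a' + 2 ≥ 2 ^ (k + 2)`, contradicting that `b` has label `k`.
Moreover `s`, hence the label, is monotone along directed paths, so every vertex on a path between
two vertices with the same label has that label too. Finally `s v ≤ n` and `n ≥ 2` give
`⌊log₂ (s v + 1)⌋ ≤ ⌈log₂ n⌉`; the `+ 1` inside the logarithm is what saves one label when `n` is
a power of two.
-/

open Classical in
/-- The number of vertices of the subtree rooted at `v`, i.e. of vertices from which `v` can be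
reached, `v` itself included. -/
noncomputable def subtreeSize {V : Type*} [Fintype V] (parent : V → Option V) (v : V) : ℕ :=
  (Finset.univ.filter
    (fun u => Relation.ReflTransGen (fun a b => parent a = some b) u v)).card

/-- The label of a vertex. The subtraction is never truncated, as `subtreeSize parent v ≥ 1`. -/
noncomputable def subtreeLabel {V : Type*} [Fintype V] (parent : V → Option V) (v : V) : ℕ :=
  Nat.log 2 (subtreeSize parent v + 1) - 1

section

variable {V : Type*} [Fintype V] {parent : V → Option V}

lemma one_le_subtreeSize (v : V) : 1 ≤ subtreeSize parent v :=
  Finset.card_pos.2 ⟨v, by simp [Relation.ReflTransGen.refl]⟩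

lemma subtreeSize_le_card (v : V) : subtreeSize parent v ≤ Fintype.card V :=
  Finset.card_le_univ _

lemma subtreeSize_mono {v w : V}
    (h : Relation.ReflTransGen (fun a b => parent a = some b) v w) :
    subtreeSize parent v ≤ subtreeSize parent w := by
  classical
  refine Finset.card_le_card fun u hu => ?_
  simp only [Finset.mem_filter, Finset.mem_univ, true_and] at hu ⊢
  exact hu.trans h

lemma subtreeLabel_mono {v w : V}
    (h : Relation.ReflTransGen (fun a b => parent a = some b) v w) :
    subtreeLabel parent v ≤ subtreeLabel parent w :=
  Nat.sub_le_sub_right (Nat.log_mono_right (Nat.succ_le_succ (subtreeSize_mono h))) 1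

/-- The subtrees of two distinct children of `b` are disjoint and do not contain `b`. -/
lemma subtreeSize_add_lt
    (hacyc : ∀ v : V, ¬ Relation.TransGen (fun a b => parent a = some b) v v)
    {a a' b : V} (ha : parent a = some b) (ha' : parent a' = some b) (hne : a ≠ a') :
    subtreeSize parent a + subtreeSize parent a' < subtreeSize parent b := by
  classical
  -- A path from one child of `b` to a different one passes through `b`, closing a cycle.
  have key : ∀ x y : V, parent x = some b → parent y = some b → x ≠ y →
      ¬ Relation.ReflTransGen (fun a b => parent a = some b) x y := by
    intro x y hx hy hxy h
    rcases Relation.ReflTransGen.cases_head h with rfl | ⟨c, hc, hcy⟩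
    · exact hxy rfl
    · obtain rfl : b = c := Option.some.inj (hx.symm.trans hc)
      exact hacyc b (Relation.TransGen.tail' hcy hy)
  unfold subtreeSize
  rw [← Finset.card_union_of_disjoint]
  · refine Finset.card_lt_card ((Finset.ssubset_iff_of_subset ?_).2 ⟨b, ?_, ?_⟩)
    · intro u hu
      simp only [Finset.mem_union, Finset.mem_filter, Finset.mem_univ, true_and] at hu ⊢
      rcases hu with hu | hu
      · exact hu.tail ha
      · exact hu.tail ha'
    · simp [Relation.ReflTransGen.refl]
    · simp only [Finset.mem_union, Finset.mem_filter, Finset.mem_univ, true_and]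
      rintro (hu | hu)
      · exact hacyc b (Relation.TransGen.tail' hu ha)
      · exact hacyc b (Relation.TransGen.tail' hu ha')
  · rw [Finset.disjoint_left]
    -- Out-degrees are at most one, so two vertices reachable from a common vertex are comparable.
    have hU : Relator.RightUnique (fun a b : V => parent a = some b) :=
      fun x y z hy hz => Option.some.inj (hy.symm.trans hz)
    intro u hu hu'
    simp only [Finset.mem_filter, Finset.mem_univ, true_and] at hu hu'
    rcases Relation.ReflTransGen.total_of_right_unique hU hu hu' with h | h
    · exact key a a' ha ha' hne h
    · exact key a' a ha' ha hne.symm h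

lemma subtreeLabel_lt_clog (h2 : 2 ≤ Fintype.card V) (v : V) :
    subtreeLabel parent v < Nat.clog 2 (Fintype.card V) := by
  have h1 := subtreeSize_le_card (parent := parent) v
  have hpow : 2 ^ Nat.log 2 (subtreeSize parent v + 1) ≤ subtreeSize parent v + 1 :=
    Nat.pow_log_le_self 2 (by omega)
  have hlog : 1 ≤ Nat.log 2 (subtreeSize parent v + 1) :=
    Nat.log_pos (by norm_num) (by have := one_le_subtreeSize (parent := parent) v; omega)
  rw [Nat.lt_clog_iff_pow_lt (by norm_num)]
  obtain ⟨k, hk⟩ := Nat.exists_eq_add_of_le' hlog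
  rw [hk, pow_succ] at hpow
  rw [subtreeLabel, hk, Nat.add_sub_cancel]
  omega

end

/-- Claim: partitioning a directed forest into sets inducing disjoint
unions of directed paths.
A directed forest is given by its parent map `parent : V → Option V` (every vertex has
out-degree at most 1), acyclic. There is a partition of `V` into at most `⌈log₂ n⌉` parts
(a labeling `Y : V → Fin ⌈log₂ n⌉`) such that each part induces a vertex-disjoint union of
directed paths (every vertex has in-degree at most 1 in the induced sub-digraph; the
out-degree is at most 1 automatically), and whenever `F` contains a directed path from `v`
to `v'` with `v, v'` in the same part, `v` and `v'` lie on the same directed path of the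
induced sub-digraph, i.e. there is a directed path from `v` to `v'` inside the part. -/
theorem statement10 {V : Type*} [Fintype V] (n : ℕ) (hn : n = Fintype.card V)
    (h2 : 2 ≤ n) (parent : V → Option V)
    (hacyc : ∀ v : V, ¬ Relation.TransGen (fun a b => parent a = some b) v v) :
    ∃ Y : V → Fin (Nat.clog 2 n),
      (∀ (b a a' : V), Y a = Y b → Y a' = Y b →
        parent a = some b → parent a' = some b → a = a') ∧
      ∀ v v' : V, Y v = Y v' →
        Relation.TransGen (fun a b => parent a = some b) v v' →
        Relation.ReflTransGen
          (fun a b => parent a = some b ∧ Y a = Y v ∧ Y b = Y v) v v' := by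
  subst hn
  refine ⟨fun v => ⟨subtreeLabel parent v, subtreeLabel_lt_clog h2 v⟩, ?_, ?_⟩
  · intro b a a' hab ha'b ha ha'
    by_contra hne
    simp only [Fin.mk.injEq, subtreeLabel] at hab ha'b
    have hlt := subtreeSize_add_lt hacyc ha ha' hne
    have hlog : ∀ v : V, 1 ≤ Nat.log 2 (subtreeSize parent v + 1) := fun v =>
      Nat.log_pos (by norm_num) (by have := one_le_subtreeSize (parent := parent) v; omega)
    have h1 := hlog a
    have h1' := hlog a'
    have h1b := hlog b
    have hpa := Nat.pow_log_le_self 2 (x := subtreeSize parent a + 1) (by omega)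
    have hpa' := Nat.pow_log_le_self 2 (x := subtreeSize parent a' + 1) (by omega)
    have hpb := Nat.lt_pow_succ_log_self (b := 2) (by norm_num) (subtreeSize parent b + 1)
    rw [show Nat.log 2 (subtreeSize parent a + 1) = Nat.log 2 (subtreeSize parent b + 1) by omega]
      at hpa
    rw [show Nat.log 2 (subtreeSize parent a' + 1) = Nat.log 2 (subtreeSize parent b + 1) by omega]
      at hpa'
    rw [pow_succ] at hpb
    omega
  · intro v v' hvv' hpath
    simp only [Fin.mk.injEq] at hvv' ⊢
    have hpath' := hpath.to_reflTransGen
    clear hpath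
    induction hpath' with
    | refl => exact Relation.ReflTransGen.refl
    | @tail b c hvb hbc ih =>
      have hb : subtreeLabel parent v = subtreeLabel parent b :=
        le_antisymm (subtreeLabel_mono hvb)
          (hvv' ▸ subtreeLabel_mono (Relation.ReflTransGen.single hbc))
      exact (ih hb).tail ⟨hbc, hb.symm, hvv'.symm⟩
end

section
/- There is a universal constant c ≥ 1 such that the following holds. Let n be such that √n is an even positive integer, let Ĝ be the wall of length √n/2 and height √n (obtained from the √n×√n grid), and let M be any set of demand pairs in Ĝ with all sources distinct and all destinations distinct. Then OPT_NDP(Ĝ,M) ≤ OPT_EDP(Ĝ,M) ≤ c·OPT_NDP(Ĝ,M). -/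
/-! Vertex-disjoint paths are edge-disjoint, which gives the first inequality.

For the second, every vertex of the wall has degree at most `3`, so a vertex shared by two
edge-disjoint paths cannot be internal to both (`endpoint_of_shared`): it is an endpoint of one of
them.  Moreover at most `4` of the paths visit a given vertex `v`: at most `3` that use an edge
at `v`, and the trivial path from `v` to itself (`card_visiting_le`).  Hence, writing `i → j` when
an endpoint of the `i`-th path lies on the `j`-th one, all out-degrees are at most `8`.  A digraph
with out-degrees at most `d` has an independent set containing at least a `1 / (2 d + 1)` fraction
of its vertices (`exists_independent`), so `c = 17` works. -/

open Finset

/-- The grid `G^{ℓ,h}` (with `h` rows and `ℓ` columns) minus the edge set `E*(G)`: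
the vertical edge `e^j_z` (between rows `z` and `z+1` of column `j`) is kept iff
`z ≡ j (mod 2)`. -/
def gridMinusE (ℓ h : ℕ) : SimpleGraph Vtx :=
  SimpleGraph.fromRel (fun u v =>
    1 ≤ u.1 ∧ u.1 ≤ h ∧ 1 ≤ u.2 ∧ u.2 ≤ ℓ ∧
    1 ≤ v.1 ∧ v.1 ≤ h ∧ 1 ≤ v.2 ∧ v.2 ≤ ℓ ∧
    ((u.1 = v.1 ∧ u.2 + 1 = v.2) ∨ (u.2 = v.2 ∧ u.1 + 1 = v.1 ∧ u.1 % 2 = u.2 % 2)))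

/-- A vertex of the wall: a vertex of degree at least 2 in `gridMinusE` (the degree-1
vertices are deleted when forming the wall). -/
def IsWallVertex (ℓ h : ℕ) (v : Vtx) : Prop :=
  2 ≤ ((gridMinusE ℓ h).neighborSet v).ncard

/-- The wall of length `ℓ/2` and height `h`, obtained from `G^{ℓ,h}` by deleting the edges
of `E*(G)` and then all degree-1 vertices. -/
def wallG (ℓ h : ℕ) : SimpleGraph Vtx :=
  SimpleGraph.fromRel (fun u v =>
    (gridMinusE ℓ h).Adj u v ∧ IsWallVertex ℓ h u ∧ IsWallVertex ℓ h v)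

/-- The demand pairs of `M` can be simultaneously routed via edge-disjoint paths in `G`. -/
def EdgeDisjointRoutable {V : Type*} (G : SimpleGraph V) (M : Finset (V × V)) : Prop :=
  ∃ P : ∀ m : {m // m ∈ M}, G.Walk m.val.1 m.val.2,
    (∀ m, (P m).IsPath) ∧
    ∀ m m' : {m // m ∈ M}, m ≠ m' → ∀ e, e ∈ (P m).edges → e ∉ (P m').edges

/-- Optimal value of the node-disjoint paths problem. -/
noncomputable def OPTn {V : Type*} (G : SimpleGraph V) (M : Finset (V × V)) : ℕ :=
  sSup {k | ∃ M' ⊆ M, M'.card = k ∧ NodeDisjointRoutable G M'}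

/-- Optimal value of the edge-disjoint paths problem. -/
noncomputable def OPTe {V : Type*} (G : SimpleGraph V) (M : Finset (V × V)) : ℕ :=
  sSup {k | ∃ M' ⊆ M, M'.card = k ∧ EdgeDisjointRoutable G M'}

/-- Some element has in-degree at most `d`, by averaging; keep it, discard its at most `2 * d`
neighbours, and recurse. -/
lemma exists_independent {α : Type*} [DecidableEq α] (R : α → α → Prop) [DecidableRel R] (d : ℕ) :
    ∀ S : Finset α, (∀ i ∈ S, (S.filter (fun j => R i j)).card ≤ d) →
      ∃ T ⊆ S, (∀ i ∈ T, ∀ j ∈ T, i ≠ j → ¬ R i j) ∧ S.card ≤ (2 * d + 1) * T.card := by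
  intro S
  induction S using Finset.strongInduction with
  | H S ih =>
    intro hS
    rcases S.eq_empty_or_nonempty with rfl | hne
    · exact ⟨∅, by simp, by simp, by simp⟩
    have hdouble : ∑ j ∈ S, (S.filter (fun i => R i j)).card ≤ ∑ _j ∈ S, d := by
      have := Finset.sum_card_bipartiteAbove_eq_sum_card_bipartiteBelow (s := S) (t := S) R
      simp only [Finset.bipartiteAbove, Finset.bipartiteBelow] at this
      rw [← this]
      exact Finset.sum_le_sum hS
    obtain ⟨v, hv, hvd⟩ := Finset.exists_le_of_sum_le hne hdouble
    set B := insert v (S.filter (fun j => R v j) ∪ S.filter (fun i => R i v)) with hB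
    have hBc : B.card ≤ 2 * d + 1 := by
      have h1 := Finset.card_insert_le v (S.filter (fun j => R v j) ∪ S.filter (fun i => R i v))
      have h2 := Finset.card_union_le (S.filter (fun j => R v j)) (S.filter (fun i => R i v))
      have h3 := hS v hv
      rw [← hB] at h1
      omega
    have hvB : v ∈ B := Finset.mem_insert_self _ _
    have hss : S \ B ⊂ S := by
      refine Finset.ssubset_iff_subset_ne.2 ⟨Finset.sdiff_subset, fun h => ?_⟩
      rw [← h] at hv
      exact (Finset.mem_sdiff.1 hv).2 hvB
    obtain ⟨T, hT, hind, hcard⟩ := ih (S \ B) hss (fun i hi =>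
      (Finset.card_le_card (Finset.filter_subset_filter _ Finset.sdiff_subset)).trans
        (hS i (Finset.mem_sdiff.1 hi).1))
    have hvT : v ∉ T := fun h => (Finset.mem_sdiff.1 (hT h)).2 hvB
    have hfar : ∀ i ∈ T, ¬ R v i ∧ ¬ R i v := by
      intro i hi
      obtain ⟨hiS, hiB⟩ := Finset.mem_sdiff.1 (hT hi)
      simp only [hB, Finset.mem_insert, Finset.mem_union, Finset.mem_filter, not_or] at hiB
      exact ⟨fun h => hiB.2.1 ⟨hiS, h⟩, fun h => hiB.2.2 ⟨hiS, h⟩⟩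
    refine ⟨insert v T, ?_, ?_, ?_⟩
    · exact Finset.insert_subset hv (hT.trans Finset.sdiff_subset)
    · intro i hi j hj hij
      rcases Finset.mem_insert.1 hi with rfl | hi'
      · rcases Finset.mem_insert.1 hj with rfl | hj'
        · exact absurd rfl hij
        · exact (hfar j hj').1
      · rcases Finset.mem_insert.1 hj with rfl | hj'
        · exact (hfar i hi').2
        · exact hind i hi' j hj' hij
    · rw [Finset.card_insert_of_notMem hvT]
      have := Finset.card_le_card_sdiff_add_card (s := S) (t := B)
      nlinarith

section Routing

variable {V : Type*} {G : SimpleGraph V}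

lemma exists_edge_of_mem_support {u w v : V} (p : G.Walk u w) (hv : v ∈ p.support)
    (hne : (u, w) ≠ (v, v)) : ∃ x, s(v, x) ∈ p.edges := by
  induction p with
  | nil => simp_all
  | @cons a b c h q ih =>
    rw [SimpleGraph.Walk.support_cons, List.mem_cons] at hv
    rcases hv with rfl | hv
    · exact ⟨b, by simp⟩
    · by_cases hb : (b, c) = (v, v)
      · obtain ⟨rfl, rfl⟩ := Prod.mk.inj hb
        exact ⟨a, by simp [Sym2.eq_swap]⟩
      · obtain ⟨x, hx⟩ := ih hv hb
        exact ⟨x, by simp [hx]⟩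

/-- A path uses two edges at each of its internal vertices, and two edge-disjoint paths would
need four at a common internal vertex. -/
lemma endpoint_of_shared {N : V → Finset V} (hN : ∀ v w, G.Adj v w → w ∈ N v)
    (hN3 : ∀ v, (N v).card ≤ 3) {a b a' b' v : V} (p : G.Walk a b) (q : G.Walk a' b')
    (hp : p.IsPath) (hq : q.IsPath) (hpq : ∀ e ∈ p.edges, e ∉ q.edges)
    (hvp : v ∈ p.support) (hvq : v ∈ q.support) : (v = a ∨ v = b) ∨ (v = a' ∨ v = b') := by
  have key : ∀ {a b : V} (p : G.Walk a b), p.IsPath → v ∈ p.support → v ≠ a → v ≠ b →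
      (p.toSubgraph.neighborSet v).ncard = 2 := by
    intro a b p hp hv ha hb
    obtain ⟨i, rfl, hi⟩ := SimpleGraph.Walk.mem_support_iff_exists_getVert.1 hv
    refine hp.ncard_neighborSet_toSubgraph_internal_eq_two ?_ ?_
    · rintro rfl; simp at ha
    · refine lt_of_le_of_ne hi ?_
      rintro rfl; simp at hb
  by_contra! hcon
  obtain ⟨⟨h1, h2⟩, h3, h4⟩ := hcon
  have hp2 := key p hp hvp h1 h2
  have hq2 := key q hq hvq h3 h4
  have hdisj : Disjoint (p.toSubgraph.neighborSet v) (q.toSubgraph.neighborSet v) := by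
    rw [Set.disjoint_left]
    intro x hx hx'
    exact hpq s(v, x) ((SimpleGraph.Walk.mem_edges_toSubgraph p).1 hx)
      ((SimpleGraph.Walk.mem_edges_toSubgraph q).1 hx')
  have hsub : p.toSubgraph.neighborSet v ∪ q.toSubgraph.neighborSet v ⊆ (N v : Set V) := by
    rintro x (hx | hx)
    · exact hN v x (SimpleGraph.Subgraph.Adj.adj_sub hx)
    · exact hN v x (SimpleGraph.Subgraph.Adj.adj_sub hx)
  have hle := Set.ncard_le_ncard hsub (N v).finite_toSet
  rw [Set.ncard_union_eq hdisj (Set.finite_of_ncard_pos (by omega))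
    (Set.finite_of_ncard_pos (by omega)), Set.ncard_coe_finset] at hle
  have := hN3 v
  omega

open Classical in
/-- Apart from the trivial path from `v` to itself, each path through `v` uses an edge at `v`,
and there are at most three of these. -/
lemma card_visiting_le {N : V → Finset V} (hN : ∀ v w, G.Adj v w → w ∈ N v)
    (hN3 : ∀ v, (N v).card ≤ 3) {M : Finset (V × V)}
    (P : ∀ m : {m // m ∈ M}, G.Walk m.val.1 m.val.2)
    (hP : ∀ m m' : {m // m ∈ M}, m ≠ m' → ∀ e, e ∈ (P m).edges → e ∉ (P m').edges) (v : V) :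
    (Finset.univ.filter (fun m : {m // m ∈ M} => v ∈ (P m).support)).card ≤ 4 := by
  set A := Finset.univ.filter (fun m : {m // m ∈ M} => v ∈ (P m).support ∧ m.val ≠ (v, v))
  set B := Finset.univ.filter (fun m : {m // m ∈ M} => m.val = (v, v))
  have hsub : Finset.univ.filter (fun m : {m // m ∈ M} => v ∈ (P m).support) ⊆ A ∪ B := by
    intro m hm
    by_cases h : m.val = (v, v) <;> simp_all [A, B]
  have hB : B.card ≤ 1 := by
    rw [Finset.card_le_one]
    intro x hx y hy
    simp only [B, Finset.mem_filter, Finset.mem_univ, true_and] at hx hy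
    exact Subtype.ext (hx.trans hy.symm)
  have hA : A.card ≤ (N v).card := by
    have hex : ∀ m ∈ A, ∃ x ∈ N v, s(v, x) ∈ (P m).edges := by
      intro m hm
      simp only [A, Finset.mem_filter, Finset.mem_univ, true_and] at hm
      obtain ⟨x, hx⟩ := exists_edge_of_mem_support (P m) hm.1 hm.2
      exact ⟨x, hN v x ((P m).adj_of_mem_edges hx), hx⟩
    refine Finset.card_le_card_of_forall_subsingleton
      (fun m x => s(v, x) ∈ (P m).edges) hex ?_
    rintro x - m ⟨-, hm⟩ m' ⟨-, hm'⟩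
    by_contra hne
    exact hP m m' hne _ hm hm'
  have h1 := Finset.card_le_card hsub
  have h2 := Finset.card_union_le A B
  have h3 := hN3 v
  omega

/-- In a graph of maximum degree at most three, a fixed fraction of any family of edge-disjoint
paths is vertex-disjoint: take an independent set for the relation saying that an endpoint
of the first path lies on the second. -/
lemma exists_nodeDisjoint_subset {N : V → Finset V} (hN : ∀ v w, G.Adj v w → w ∈ N v)
    (hN3 : ∀ v, (N v).card ≤ 3) {M : Finset (V × V)} (hM : EdgeDisjointRoutable G M) :
    ∃ T ⊆ M, NodeDisjointRoutable G T ∧ M.card ≤ 17 * T.card := by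
  classical
  obtain ⟨P, hpath, hP⟩ := hM
  obtain ⟨T, -, hind, hcard⟩ := exists_independent
    (fun i j : {m // m ∈ M} => i.val.1 ∈ (P j).support ∨ i.val.2 ∈ (P j).support) 8 Finset.univ
    (by
      intro i _
      rw [Finset.filter_or]
      refine (Finset.card_union_le _ _).trans ?_
      have h1 := card_visiting_le hN hN3 P hP i.val.1
      have h2 := card_visiting_le hN hN3 P hP i.val.2
      omega)
  have hmem : ∀ m ∈ T.map (Function.Embedding.subtype _),
      ∃ h : m ∈ M, (⟨m, h⟩ : {m // m ∈ M}) ∈ T := by simp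
  refine ⟨T.map (Function.Embedding.subtype _), fun m hm => (hmem m hm).1,
    ⟨fun m => P ⟨m.val, (hmem m.val m.2).1⟩, fun m => hpath _, ?_⟩, ?_⟩
  · intro m m' hne x hx hx'
    have hne' : (⟨m.val, (hmem m.val m.2).1⟩ : {m // m ∈ M}) ≠ ⟨m'.val, (hmem m'.val m'.2).1⟩ :=
      fun h => hne (Subtype.ext (congrArg (fun z => z.val) h))
    have ha := hind _ (hmem m.val m.2).2 _ (hmem m'.val m'.2).2 hne'
    have hb := hind _ (hmem m'.val m'.2).2 _ (hmem m.val m.2).2 hne'.symm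
    rcases endpoint_of_shared hN hN3 _ _ (hpath _) (hpath _) (hP _ _ hne') hx hx' with
      (rfl | rfl) | (rfl | rfl)
    · exact ha (Or.inl hx')
    · exact ha (Or.inr hx')
    · exact hb (Or.inl hx)
    · exact hb (Or.inr hx)
  · simpa using hcard

lemma nodeDisjointRoutable_empty : NodeDisjointRoutable G ∅ :=
  ⟨fun m => absurd m.2 (Finset.notMem_empty _), fun m => absurd m.2 (Finset.notMem_empty _),
    fun m => absurd m.2 (Finset.notMem_empty _)⟩

lemma NodeDisjointRoutable.edgeDisjointRoutable {M : Finset (V × V)}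
    (h : NodeDisjointRoutable G M) : EdgeDisjointRoutable G M := by
  obtain ⟨P, hpath, hP⟩ := h
  refine ⟨P, hpath, fun m m' hne e => ?_⟩
  induction e with
  | h a b =>
    intro he he'
    exact hP m m' hne a ((P m).fst_mem_support_of_mem_edges he)
      ((P m').fst_mem_support_of_mem_edges he')

/-- The supremum defining `OPTn` and `OPTe` is over a set of naturals bounded by `M.card`. -/
lemma bddAbove_routable (M : Finset (V × V)) (p : Finset (V × V) → Prop) :
    BddAbove {k | ∃ M' ⊆ M, M'.card = k ∧ p M'} := by
  refine ⟨M.card, ?_⟩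
  rintro k ⟨M', hM', rfl, -⟩
  exact Finset.card_le_card hM'

end Routing

/-- The possible neighbours of `v` in the wall: left, right, and a single vertical one whose
direction is dictated by the parity of `v`. -/
def wallNbrs (v : Vtx) : Finset Vtx :=
  {(v.1, v.2 + 1), (v.1, v.2 - 1), if v.1 % 2 = v.2 % 2 then (v.1 + 1, v.2) else (v.1 - 1, v.2)}

lemma mem_wallNbrs {ℓ h : ℕ} (v w : Vtx) (hvw : (wallG ℓ h).Adj v w) : w ∈ wallNbrs v := by
  have hadj : (gridMinusE ℓ h).Adj v w := by
    rw [wallG, SimpleGraph.fromRel_adj] at hvw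
    rcases hvw.2 with h | h
    · exact h.1
    · exact h.1.symm
  rw [gridMinusE, SimpleGraph.fromRel_adj] at hadj
  obtain ⟨a, b⟩ := v
  obtain ⟨a', b'⟩ := w
  simp only [wallNbrs, Finset.mem_insert, Finset.mem_singleton]
  split_ifs <;> simp only [Prod.mk.injEq] at * <;> omega

/-- Observation: NDP vs EDP in walls.
There is a universal constant `c` such that for every wall `Ĝ` of length `√n/2` and height
`√n` and every set `M` of demand pairs in `Ĝ` with distinct sources and distinct
destinations, `OPT_NDP(Ĝ,M) ≤ OPT_EDP(Ĝ,M) ≤ c·OPT_NDP(Ĝ,M)`. -/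
theorem statement12 :
    ∃ c : ℕ, 1 ≤ c ∧ ∀ m : ℕ, 0 < m → Even m →
      ∀ M : Finset DPair,
        (∀ p ∈ M, IsWallVertex m m p.1 ∧ IsWallVertex m m p.2) →
        DistinctSources M → DistinctDests M →
        OPTn (wallG m m) M ≤ OPTe (wallG m m) M ∧
        OPTe (wallG m m) M ≤ c * OPTn (wallG m m) M := by
  refine ⟨17, by norm_num, fun m _ _ M _ _ _ => ⟨?_, ?_⟩⟩
  · have hne : {k | ∃ M' ⊆ M, M'.card = k ∧ NodeDisjointRoutable (wallG m m) M'}.Nonempty :=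
      ⟨0, ∅, by simp, by simp, nodeDisjointRoutable_empty⟩
    refine csSup_le hne ?_
    rintro k ⟨M', hM', rfl, hr⟩
    exact le_csSup (bddAbove_routable M _) ⟨M', hM', rfl, hr.edgeDisjointRoutable⟩
  · have hne : {k | ∃ M' ⊆ M, M'.card = k ∧ EdgeDisjointRoutable (wallG m m) M'}.Nonempty :=
      ⟨0, ∅, by simp, by simp, nodeDisjointRoutable_empty.edgeDisjointRoutable⟩
    refine csSup_le hne ?_
    rintro k ⟨M', hM', rfl, hr⟩
    obtain ⟨T, hT, hTr, hcard⟩ :=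
      exists_nodeDisjoint_subset mem_wallNbrs (fun _ => Finset.card_le_three) hr
    exact hcard.trans (Nat.mul_le_mul_left _
      (le_csSup (bddAbove_routable M _) ⟨T, hT.trans hM', rfl, hTr⟩))
end

section
/- There is a universal constant c > 0 such that the following holds. Let n be such that √n is an even positive integer, let G be the √n×√n grid and Ĝ ⊆ G the wall of length √n/2 and height √n obtained from it, and let M be a set of demand pairs in Ĝ, with all sources distinct and all destinations distinct, such that every source lies on the boundary Γ(Ĝ) of the wall. Let M' = {(s',t) : (s,t) ∈ M}, where s' = s if s ∈ Γ(G); s' is the vertex of Γ(G) lying immediately to the left of s if s belongs to the first column of Ĝ; and s' is the vertex of Γ(G) lying immediately to the right of s if s belongs to the last column of Ĝ. Then OPT_NDP(Ĝ,M') ≥ c·OPT_NDP(Ĝ,M); moreover, for every set P' of pairwise node-disjoint paths in Ĝ routing a subset of the demand pairs of M', there exists a set of at least c·|P'| pairwise node-disjoint paths in Ĝ routing a subset of the demand pairs of M. -/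
/-!
Relocation moves each source `s` to `s' = s` or to a neighbour `s'` of `s` in the wall, so a path
from `s` to `t` becomes a path from `s'` to `t` after attaching (at most) the single vertex `s'`
and short-cutting. The new paths can only clash where the new source of one pair lies on the old
path of another. Since the old paths are disjoint, the new source of a pair lies on at most one of
them, so the clash relation has out-degree at most one; such a relation on `k` elements has an
independent set of size at least `k / 3` (`exists_independent`). Keeping the pairs of an independent
set gives the constant `1 / 3`.

The same argument (`exists_rerouting`) works in both directions. The only asymmetry is that two
relocated sources may coincide: this happens only if one of them did not move, and then it is again
a clash of a new source with an old path.
-/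

open Finset

/-- The boundary `Γ(Ĝ)` of the wall obtained from the m×m grid: its first and last rows,
and its first and last columns (the latter occupy grid columns `{1,2}` and `{m-1,m}`). -/
def WallBoundary (m : ℕ) (v : Vtx) : Prop :=
  IsWallVertex m m v ∧
    (v.1 = 1 ∨ v.1 = m ∨ v.2 = 1 ∨ v.2 = 2 ∨ v.2 = m - 1 ∨ v.2 = m)

/-- Relocation of a source vertex of the wall boundary to the boundary `Γ(G)` of the
underlying grid: a vertex of `Γ(G)` is kept; a vertex of the first column of the wall
(grid column 2) moves one step left; a vertex of the last column of the wall (grid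
column m-1) moves one step right. -/
def relocate (m : ℕ) (s : Vtx) : Vtx :=
  if s.1 = 1 ∨ s.1 = m ∨ s.2 = 1 ∨ s.2 = m then s
  else if s.2 = 2 then (s.1, 1)
  else if s.2 = m - 1 then (s.1, m)
  else s

/-! ### Independent sets in relations of out-degree at most one -/

/-- A relation in which every element is related to at most one other has an independent set
containing a third of the elements: some `v` has in-degree at most one by averaging, so choosing
`v` discards at most its in-neighbour and its out-neighbour. -/
theorem exists_independent_s13 {α : Type*} [DecidableEq α] (R : α → α → Prop)
    (hirr : ∀ x, ¬ R x x) (A : Finset α)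
    (hR : ∀ x ∈ A, ∀ y ∈ A, ∀ z ∈ A, R x y → R x z → y = z) :
    ∃ B ⊆ A, A.card ≤ 3 * B.card ∧ ∀ x ∈ B, ∀ y ∈ B, ¬ R x y := by
  classical
  induction A using Finset.strongInduction with
  | H A ih =>
    rcases A.eq_empty_or_nonempty with rfl | hne
    · exact ⟨∅, by simp⟩
    have hout : ∀ x ∈ A, (A.filter (fun y => R x y)).card ≤ 1 := by
      intro x hx
      rw [Finset.card_le_one]
      intro y hy z hz
      rw [Finset.mem_filter] at hy hz
      exact hR x hx y hy.1 z hz.1 hy.2 hz.2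
    obtain ⟨v, hv, hin⟩ : ∃ v ∈ A, (A.filter (fun u => R u v)).card ≤ 1 := by
      by_contra! hcon
      have h1 : ∑ v ∈ A, 2 ≤ ∑ v ∈ A, (A.filter (fun u => R u v)).card :=
        Finset.sum_le_sum fun v hv => hcon v hv
      have h2 : ∑ v ∈ A, (A.filter (fun u => R v u)).card ≤ ∑ v ∈ A, 1 :=
        Finset.sum_le_sum hout
      have h3 := Finset.sum_card_bipartiteAbove_eq_sum_card_bipartiteBelow (s := A) (t := A) R
      simp only [Finset.bipartiteAbove, Finset.bipartiteBelow] at h3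
      have := hne.card_pos
      simp only [Finset.sum_const, smul_eq_mul] at h1 h2
      omega
    let A' := A.filter (fun x => x ≠ v ∧ ¬ R x v ∧ ¬ R v x)
    have hsub : A' ⊆ A := Finset.filter_subset _ _
    have hvA' : v ∉ A' := by simp [A']
    obtain ⟨B, hBA, hcard, hind⟩ := ih A' ⟨hsub, fun h => hvA' (h hv)⟩
      (fun x hx y hy z hz => hR x (hsub hx) y (hsub hy) z (hsub hz))
    refine ⟨insert v B, ?_, ?_, ?_⟩
    · exact Finset.insert_subset hv (hBA.trans hsub)
    · rw [Finset.card_insert_of_notMem fun h => hvA' (hBA h)]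
      have hcover : A ⊆ A' ∪ ({v} ∪ (A.filter (fun u => R u v) ∪ A.filter (fun y => R v y))) := by
        intro x hx
        simp only [A', Finset.mem_union, Finset.mem_filter, Finset.mem_singleton]
        tauto
      have h1 := Finset.card_le_card hcover
      have h2 := Finset.card_union_le A'
        ({v} ∪ (A.filter (fun u => R u v) ∪ A.filter (fun y => R v y)))
      have h3 := Finset.card_union_le {v} (A.filter (fun u => R u v) ∪ A.filter (fun y => R v y))
      have h4 := Finset.card_union_le (A.filter (fun u => R u v)) (A.filter (fun y => R v y))
      have h5 := hout v hv
      rw [Finset.card_singleton] at h3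
      omega
    · have key : ∀ x ∈ B, ¬ R x v ∧ ¬ R v x := fun x hx =>
        (Finset.mem_filter.1 (hBA hx)).2.2
      intro x hx y hy
      rw [Finset.mem_insert] at hx hy
      rcases hx with rfl | hx <;> rcases hy with rfl | hy
      · exact hirr _
      · exact (key y hy).2
      · exact (key x hx).1
      · exact hind x hx y hy

/-! ### Rerouting disjoint paths from neighbouring sources -/

/-- Prepend a vertex equal or adjacent to the start of a walk, then short-cut to a path. -/
theorem exists_path_from_neighbor {V : Type*} {G : SimpleGraph V} {a a' t : V}
    (h : a' = a ∨ G.Adj a' a) (p : G.Walk a t) :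
    ∃ q : G.Walk a' t, q.IsPath ∧ ∀ x ∈ q.support, x = a' ∨ x ∈ p.support := by
  classical
  rcases h with rfl | h
  · exact ⟨p.bypass, p.bypass_isPath, fun x hx => Or.inr (p.support_bypass_subset_support hx)⟩
  · refine ⟨(SimpleGraph.Walk.cons h p).bypass, SimpleGraph.Walk.bypass_isPath _, fun x hx => ?_⟩
    simpa using SimpleGraph.Walk.support_bypass_subset_support _ hx

/-- If the pairs `(a p, p.2)` for `p ∈ A` are routable and each new source `a' p` is equal or
adjacent to `a p`, then a third of the pairs `(a' p, p.2)` are routable. The hypothesis `hcol`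
lets new sources coincide only where one of them did not move. -/
theorem exists_rerouting {V : Type*} [DecidableEq V] {G : SimpleGraph V} (A : Finset (V × V))
    (a a' : V × V → V)
    (hdest : ∀ p ∈ A, ∀ q ∈ A, p.2 = q.2 → p = q)
    (hadj : ∀ p ∈ A, a' p = a p ∨ G.Adj (a' p) (a p))
    (hcol : ∀ p ∈ A, ∀ q ∈ A, a' p = a' q → p = q ∨ a' p = a p ∨ a' q = a q)
    (hroute : NodeDisjointRoutable G (A.image fun p => (a p, p.2))) :
    ∃ B ⊆ A, A.card ≤ 3 * B.card ∧
      NodeDisjointRoutable G (B.image fun p => (a' p, p.2)) := by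
  classical
  obtain ⟨P, -, hdisj⟩ := hroute
  let ι : ∀ p ∈ A, {m // m ∈ A.image fun p => (a p, p.2)} := fun p hp =>
    ⟨(a p, p.2), Finset.mem_image_of_mem (fun p => (a p, p.2)) hp⟩
  have hPdisj : ∀ p (hp : p ∈ A) q (hq : q ∈ A), ∀ x, x ∈ (P (ι p hp)).support →
      x ∈ (P (ι q hq)).support → p = q := by
    intro p hp q hq x hxp hxq
    by_contra hne
    refine hdisj (ι p hp) (ι q hq) (fun h => hne ?_) x hxp hxq
    exact hdest p hp q hq (congrArg (fun m => m.val.2) h)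
  -- The clash relation: the new source of `p` lies on the old path of another pair `q`.
  obtain ⟨B, hBA, hcard, hind⟩ := exists_independent_s13
    (fun p q => p ≠ q ∧ ∃ hq : q ∈ A, a' p ∈ (P (ι q hq)).support)
    (fun x h => h.1 rfl) A (by
      rintro x - y - z - ⟨-, hy, h1⟩ ⟨-, hz, h2⟩
      exact hPdisj y hy z hz _ h1 h2)
  refine ⟨B, hBA, hcard, ?_⟩
  choose Q hQ hQs using fun (p : V × V) (hp : p ∈ A) =>
    exists_path_from_neighbor (hadj p hp) (P (ι p hp))
  have hsrc : ∀ p (hp : p ∈ A), a p ∈ (P (ι p hp)).support := fun p hp =>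
    SimpleGraph.Walk.start_mem_support _
  have hQdisj : ∀ p (hp : p ∈ B) q (hq : q ∈ B), ∀ x, x ∈ (Q p (hBA hp)).support →
      x ∈ (Q q (hBA hq)).support → p = q := by
    intro p hp q hq x hxp hxq
    by_contra hne
    rcases hQs p (hBA hp) x hxp with h1 | h1 <;> rcases hQs q (hBA hq) x hxq with h2 | h2
    · have heq : a' p = a' q := h1.symm.trans h2
      rcases hcol p (hBA hp) q (hBA hq) heq with h | h | h
      · exact hne h
      · refine hind q hq p hp ⟨Ne.symm hne, hBA hp, ?_⟩
        rw [← heq, h]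
        exact hsrc p (hBA hp)
      · refine hind p hp q hq ⟨hne, hBA hq, ?_⟩
        rw [heq, h]
        exact hsrc q (hBA hq)
    · exact hind p hp q hq ⟨hne, hBA hq, h1 ▸ h2⟩
    · exact hind q hq p hp ⟨Ne.symm hne, hBA hp, h2 ▸ h1⟩
    · exact hne (hPdisj p (hBA hp) q (hBA hq) x h1 h2)
  have hex : ∀ m : {m // m ∈ B.image fun p => (a' p, p.2)}, ∃ p, p ∈ B ∧ (a' p, p.2) = m.val :=
    fun m => by simpa only [Finset.mem_image] using m.2
  choose r hr hrm using hex
  have hrm' : ∀ m, (r m).2 = m.val.2 := fun m => by rw [← hrm m]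
  refine ⟨fun m => (Q (r m) (hBA (hr m))).copy (congrArg Prod.fst (hrm m))
    (hrm' m), fun m => ?_, fun m m' hne x hx hx' => hne ?_⟩
  · rw [SimpleGraph.Walk.isPath_copy]
    exact hQ _ _
  · rw [SimpleGraph.Walk.support_copy] at hx hx'
    have h := hQdisj (r m) (hr m) (r m') (hr m') x hx hx'
    exact Subtype.ext (by rw [← hrm m, ← hrm m', h])

/-! ### Relocation in the wall -/

theorem gridMinusE_adj_horizontal {ℓ h i j : ℕ} (hi : 1 ≤ i) (hih : i ≤ h) (hj : 1 ≤ j)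
    (hjl : j + 1 ≤ ℓ) : (gridMinusE ℓ h).Adj (i, j) (i, j + 1) := by
  rw [gridMinusE, SimpleGraph.fromRel_adj]
  refine ⟨by simp, Or.inl ?_⟩
  dsimp only
  omega

theorem gridMinusE_adj_vertical {ℓ h i j : ℕ} (hi : 1 ≤ i) (hih : i + 1 ≤ h) (hj : 1 ≤ j)
    (hjl : j ≤ ℓ) (hpar : i % 2 = j % 2) : (gridMinusE ℓ h).Adj (i, j) (i + 1, j) := by
  rw [gridMinusE, SimpleGraph.fromRel_adj]
  refine ⟨by simp, Or.inl ?_⟩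
  dsimp only
  omega

theorem isWallVertex_of_adj {ℓ h : ℕ} {v x y : Vtx} (hx : (gridMinusE ℓ h).Adj v x)
    (hy : (gridMinusE ℓ h).Adj v y) (hxy : x ≠ y) : IsWallVertex ℓ h v := by
  -- The `ncard` of an infinite set is zero, so finiteness of the neighbourhood is needed.
  have hfin : ((gridMinusE ℓ h).neighborSet v).Finite := by
    refine (Finset.finite_toSet (Finset.Icc 1 h ×ˢ Finset.Icc 1 ℓ)).subset fun w hw => ?_
    rw [SimpleGraph.mem_neighborSet, gridMinusE, SimpleGraph.fromRel_adj] at hw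
    simp only [Finset.coe_product, Finset.coe_Icc, Set.mem_prod, Set.mem_Icc]
    omega
  rw [IsWallVertex, ← Set.ncard_pair hxy]
  refine Set.ncard_le_ncard ?_ hfin
  rintro w (rfl | rfl)
  · exact hx
  · exact hy

/-- A vertex `(i, j)` outside the first and last rows that has a horizontal neighbour `x` lies in
the wall, since one of its two vertical edges is kept. -/
theorem isWallVertex_of_inner_row {ℓ h i j : ℕ} {x : Vtx} (hi : 2 ≤ i) (hih : i + 1 ≤ h)
    (hj : 1 ≤ j) (hjl : j ≤ ℓ) (hx : (gridMinusE ℓ h).Adj (i, j) x) (hxi : x.1 = i) :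
    IsWallVertex ℓ h (i, j) := by
  by_cases hpar : i % 2 = j % 2
  · refine isWallVertex_of_adj hx (gridMinusE_adj_vertical (by omega) hih hj hjl hpar) ?_
    rintro rfl
    simp at hxi
  · obtain ⟨k, rfl⟩ : ∃ k, i = k + 1 := ⟨i - 1, by omega⟩
    refine isWallVertex_of_adj hx
      (gridMinusE_adj_vertical (i := k) (by omega) (by omega) hj hjl (by omega)).symm ?_
    rintro rfl
    simp at hxi

theorem IsWallVertex.mem_grid {ℓ h : ℕ} {v : Vtx} (hv : IsWallVertex ℓ h v) :
    1 ≤ v.1 ∧ v.1 ≤ h ∧ 1 ≤ v.2 ∧ v.2 ≤ ℓ := by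
  have hpos : ((gridMinusE ℓ h).neighborSet v).ncard ≠ 0 := by
    unfold IsWallVertex at hv
    omega
  obtain ⟨w, hw⟩ := Set.nonempty_of_ncard_ne_zero hpos
  rw [SimpleGraph.mem_neighborSet, gridMinusE, SimpleGraph.fromRel_adj] at hw
  omega

theorem relocate_eq_or_adj {m : ℕ} {s : Vtx} (hs : IsWallVertex m m s) :
    relocate m s = s ∨ (wallG m m).Adj (relocate m s) s := by
  obtain ⟨i, j⟩ := s
  have hg := hs.mem_grid
  unfold relocate
  dsimp only at hg ⊢
  split_ifs with h1 h2 h3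
  · exact Or.inl rfl
  · right
    subst h2
    have hadj : (gridMinusE m m).Adj (i, 1) (i, 2) :=
      gridMinusE_adj_horizontal (by omega) (by omega) le_rfl (by omega)
    have hw : IsWallVertex m m (i, 1) :=
      isWallVertex_of_inner_row (by omega) (by omega) le_rfl (by omega) hadj rfl
    rw [wallG, SimpleGraph.fromRel_adj]
    exact ⟨hadj.ne, Or.inl ⟨hadj, hw, hs⟩⟩
  · right
    obtain rfl : m = j + 1 := by omega
    have hadj : (gridMinusE (j + 1) (j + 1)).Adj (i, j + 1) (i, j) :=
      (gridMinusE_adj_horizontal (by omega) (by omega) (by omega) le_rfl).symm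
    have hw : IsWallVertex (j + 1) (j + 1) (i, j + 1) :=
      isWallVertex_of_inner_row (by omega) (by omega) (by omega) le_rfl hadj rfl
    rw [wallG, SimpleGraph.fromRel_adj]
    exact ⟨hadj.ne, Or.inl ⟨hadj, hw, hs⟩⟩
  · exact Or.inl rfl

theorem relocate_collision {m : ℕ} {s t : Vtx} (hs : IsWallVertex m m s)
    (ht : IsWallVertex m m t) (h : relocate m s = relocate m t) :
    s = t ∨ relocate m s = s ∨ relocate m t = t := by
  obtain ⟨i, j⟩ := s
  obtain ⟨k, l⟩ := t
  have hg := hs.mem_grid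
  have hg' := ht.mem_grid
  unfold relocate at h ⊢
  dsimp only at hg hg' h ⊢
  split_ifs at h ⊢ <;> simp only [Prod.mk.injEq] at h ⊢ <;> grind

/-! ### The optimal value and the main result -/

/-- The supremum defining `OPTn` is attained, and it bounds every routable subset. -/
theorem exists_OPTn {V : Type*} (G : SimpleGraph V) (M : Finset (V × V)) :
    (∃ N ⊆ M, N.card = OPTn G M ∧ NodeDisjointRoutable G N) ∧
      ∀ N ⊆ M, NodeDisjointRoutable G N → N.card ≤ OPTn G M := by
  have hbdd : BddAbove {k | ∃ N ⊆ M, N.card = k ∧ NodeDisjointRoutable G N} := by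
    refine ⟨M.card, ?_⟩
    rintro k ⟨N, hN, rfl, -⟩
    exact Finset.card_le_card hN
  have hne : {k | ∃ N ⊆ M, N.card = k ∧ NodeDisjointRoutable G N}.Nonempty := by
    refine ⟨0, ∅, by simp, by simp, ?_⟩
    exact ⟨fun m => absurd m.2 (Finset.notMem_empty _), fun m => absurd m.2 (Finset.notMem_empty _),
      fun m => absurd m.2 (Finset.notMem_empty _)⟩
  exact ⟨Nat.sSup_mem hne hbdd, fun N hN hr => le_csSup hbdd ⟨N, hN, rfl, hr⟩⟩

/-- Observation: relocating wall-boundary sources to the grid boundary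
preserves the optimal value up to a constant factor, and solutions can be transformed
back. -/
theorem statement13 :
    ∃ c : ℝ, 0 < c ∧ ∀ m : ℕ, 0 < m → Even m →
      ∀ M : Finset DPair,
        (∀ p ∈ M, IsWallVertex m m p.1 ∧ IsWallVertex m m p.2) →
        DistinctSources M → DistinctDests M →
        (∀ p ∈ M, WallBoundary m p.1) →
        ∀ M' : Finset DPair, M' = M.image (fun p => (relocate m p.1, p.2)) →
          c * (OPTn (wallG m m) M : ℝ) ≤ (OPTn (wallG m m) M' : ℝ) ∧
          ∀ M'' ⊆ M', NodeDisjointRoutable (wallG m m) M'' →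
            ∃ M₀ ⊆ M, NodeDisjointRoutable (wallG m m) M₀ ∧
              c * (M''.card : ℝ) ≤ (M₀.card : ℝ) := by
  refine ⟨1 / 3, by norm_num, ?_⟩
  rintro m - - M hM hsrc hdst - M' rfl
  have hinj : ∀ A ⊆ M, (A.image fun p : DPair => (relocate m p.1, p.2)).card = A.card := by
    intro A hA
    refine Finset.card_image_of_injOn fun p hp q hq h => ?_
    exact hdst p (hA hp) q (hA hq) (Prod.mk.inj h).2
  constructor
  · obtain ⟨N, hNM, hNcard, hN⟩ := (exists_OPTn (wallG m m) M).1
    obtain ⟨B, hBN, hcard, hB⟩ := exists_rerouting (G := wallG m m) N (fun p => p.1)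
      (fun p => relocate m p.1)
      (fun p hp q hq => hdst p (hNM hp) q (hNM hq))
      (fun p hp => relocate_eq_or_adj (hM p (hNM hp)).1)
      (fun p hp q hq h => (relocate_collision (hM p (hNM hp)).1 (hM q (hNM hq)).1 h).imp_left
        (hsrc p (hNM hp) q (hNM hq)))
      (by simpa using hN)
    have hle := (exists_OPTn (wallG m m) (M.image fun p : DPair => (relocate m p.1, p.2))).2 _
      (Finset.image_subset_image (hBN.trans hNM)) hB
    rw [hinj B (hBN.trans hNM)] at hle
    have h3 : OPTn (wallG m m) M ≤
        3 * OPTn (wallG m m) (M.image fun p : DPair => (relocate m p.1, p.2)) := by omega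
    have h3' : (OPTn (wallG m m) M : ℝ) ≤
        3 * OPTn (wallG m m) (M.image fun p : DPair => (relocate m p.1, p.2)) := by
      exact_mod_cast h3
    linarith
  · intro M'' hM'' hroute
    obtain ⟨A, hAM, rfl⟩ := Finset.subset_image_iff.1 hM''
    have hAM' : A ⊆ M := by exact_mod_cast hAM
    obtain ⟨B, hBA, hcard, hB⟩ := exists_rerouting (G := wallG m m) A
      (fun p => relocate m p.1) (fun p => p.1)
      (fun p hp q hq => hdst p (hAM' hp) q (hAM' hq))
      (fun p hp => (relocate_eq_or_adj (hM p (hAM' hp)).1).imp Eq.symm SimpleGraph.Adj.symm)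
      (fun p hp q hq h => Or.inl (hsrc p (hAM' hp) q (hAM' hq) h))
      hroute
    refine ⟨B, hBA.trans hAM', by simpa using hB, ?_⟩
    rw [hinj A hAM']
    have h3 : (A.card : ℝ) ≤ 3 * B.card := by exact_mod_cast hcard
    linarith
end

section
/- Let n ≥ 2 and ρ ≥ 1 be integers and let d₁ ≥ d₂ ≥ … ≥ d_ρ ≥ 2 be integers. Let U' be a finite set, and let P₁,…,P_ρ be partitions of U' such that P_{h+1} refines P_h for every 1 ≤ h < ρ, and such that for every 1 ≤ h ≤ ρ, every class of P_h has at most 64·d_h·(log₂ n)³ elements. Then there exists a subset U'' ⊆ U' with |U''| ≥ |U'|/(256·(log₂ n)⁴) such that for every 1 ≤ h ≤ ρ, every class of P_h contains at most d_h elements of U''. -/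
/-!
The classes of the partitions form a laminar family, so `U'` admits a linear order (lexicographic
in the labels `f 1, …, f ρ`, with ties broken arbitrarily) in which every class of every level is a
block of consecutive elements (`exists_convex_key`).  Put `m = ⌈64 (log₂ n)³⌉` and let `U''`
consist of the elements whose rank in this order is a multiple of `m`.  A block of at most `m * d`
consecutive elements meets `U''` in at most `d` elements, and `m * |U''| ≥ |U'|`
(`exists_sparse_subset`).  Since `log₂ n ≥ 1`, one has `m ≤ 64 (log₂ n)³ + 1 ≤ 256 (log₂ n)⁴`.
-/

/-- On a finite set, the lexicographic combination of two `ℕ`-valued keys is again given by an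
`ℕ`-valued key. -/
lemma exists_lex_key {α : Type*} (U : Finset α) (key g : α → ℕ) :
    ∃ key' : α → ℕ, (∀ x ∈ U, ∀ y ∈ U, key' x ≤ key' y → key x ≤ key y) ∧
      ∀ x ∈ U, ∀ y ∈ U, (key' x = key' y ↔ key x = key y ∧ g x = g y) := by
  set M := U.sup g + 1 with hM
  have hlt : ∀ x ∈ U, g x < M := fun x hx => Nat.lt_succ_of_le (Finset.le_sup hx)
  have hdiv : ∀ x ∈ U, (M * key x + g x) / M = key x := by
    intro x hx
    rw [Nat.mul_add_div (by omega), Nat.div_eq_of_lt (hlt x hx), add_zero]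
  refine ⟨fun x => M * key x + g x, ?_, ?_⟩
  · intro x hx y hy hxy
    have := Nat.div_le_div_right (c := M) hxy
    rwa [hdiv x hx, hdiv y hy] at this
  · intro x hx y hy
    constructor
    · intro hxy
      have h1 : key x = key y := by
        have := congrArg (· / M) hxy
        simpa only [hdiv x hx, hdiv y hy] using this
      refine ⟨h1, ?_⟩
      simp only [h1] at hxy
      omega
    · rintro ⟨h1, h2⟩
      simp only [h1, h2]

/-- There is an injective key on `U` in whose order every fiber of each `f h`, `1 ≤ h ≤ ρ`, is
convex. -/
lemma exists_convex_key {α : Type*} (ρ : ℕ) (hρ : 1 ≤ ρ) (U : Finset α) (f : ℕ → α → ℕ)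
    (hrefine : ∀ h, 1 ≤ h → h < ρ → ∀ a b : α, f (h + 1) a = f (h + 1) b → f h a = f h b) :
    ∃ key : α → ℕ, Set.InjOn key U ∧ ∀ h, 1 ≤ h → h ≤ ρ → ∀ x ∈ U, ∀ y ∈ U, ∀ z ∈ U,
      key x ≤ key y → key y ≤ key z → f h x = f h z → f h y = f h x := by
  -- A key for the levels `1, …, k` that is constant on the classes of level `k`.
  have main : ∀ k, 1 ≤ k → k ≤ ρ → ∃ key : α → ℕ,
      (∀ x ∈ U, ∀ y ∈ U, f k x = f k y → key x = key y) ∧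
      ∀ h, 1 ≤ h → h ≤ k → ∀ x ∈ U, ∀ y ∈ U, ∀ z ∈ U,
      key x ≤ key y → key y ≤ key z → f h x = f h z → f h y = f h x := by
    intro k hk
    induction k, hk using Nat.le_induction with
    | base =>
      intro _
      refine ⟨f 1, fun x _ y _ h => h, ?_⟩
      intro h h1 h2 x _ y _ z _ hxy hyz hxz
      obtain rfl : h = 1 := by omega
      omega
    | succ k hk ih =>
      intro hkρ
      obtain ⟨key, hconst, hconv⟩ := ih (by omega)
      obtain ⟨key', hle, heq⟩ := exists_lex_key U key (f (k + 1))
      have hconst' : ∀ x ∈ U, ∀ y ∈ U, f (k + 1) x = f (k + 1) y → key' x = key' y :=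
        fun x hx y hy hxy =>
          (heq x hx y hy).2 ⟨hconst x hx y hy (hrefine k hk (by omega) x y hxy), hxy⟩
      refine ⟨key', hconst', ?_⟩
      intro h h1 h2 x hx y hy z hz hxy hyz hxz
      rcases Nat.lt_or_ge k h with hlt | hge
      · obtain rfl : h = k + 1 := by omega
        have := hconst' x hx z hz hxz
        exact ((heq y hy x hx).1 (by omega)).2
      · exact hconv h h1 hge x hx y hy z hz (hle x hx y hy hxy) (hle y hy z hz hyz) hxz
  obtain ⟨key, -, hconv⟩ := main ρ hρ le_rfl
  obtain ⟨e, he⟩ : ∃ e : α → ℕ, Set.InjOn e U :=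
    Set.countable_iff_exists_injOn.1 U.countable_toSet
  obtain ⟨key', hle, heq⟩ := exists_lex_key U key e
  refine ⟨key', fun x hx y hy hxy => he hx hy ((heq x hx y hy).1 hxy).2, ?_⟩
  intro h h1 h2 x hx y hy z hz hxy hyz hxz
  exact hconv h h1 h2 x hx y hy z hz (hle x hx y hy hxy) (hle y hy z hz hyz) hxz

lemma card_multiples_Ico_le (m : ℕ) (hm : 0 < m) (a d : ℕ) :
    ((Finset.Ico a (a + m * d)).filter (fun t => m ∣ t)).card ≤ d := by
  induction d with
  | zero => simp
  | succ d ih =>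
    have h1 : ((Finset.Ico (a + m * d) (a + m * d + m)).filter (fun t => m ∣ t)).card ≤ 1 := by
      rw [Finset.card_le_one]
      intro x hx y hy
      simp only [Finset.mem_filter, Finset.mem_Ico] at hx hy
      obtain ⟨⟨hx1, hx2⟩, u, rfl⟩ := hx
      obtain ⟨⟨hy1, hy2⟩, v, rfl⟩ := hy
      have huv : u < v + 1 := by
        refine Nat.lt_of_mul_lt_mul_left (a := m) ?_
        rw [Nat.mul_succ]; omega
      have hvu : v < u + 1 := by
        refine Nat.lt_of_mul_lt_mul_left (a := m) ?_
        rw [Nat.mul_succ]; omega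
      rw [show u = v by omega]
    have h2 : Finset.Ico a (a + m * (d + 1)) =
        Finset.Ico a (a + m * d) ∪ Finset.Ico (a + m * d) (a + m * d + m) := by
      rw [Finset.Ico_union_Ico_eq_Ico (by omega) (by omega), Nat.mul_succ, add_assoc]
    rw [h2, Finset.filter_union]
    exact (Finset.card_union_le _ _).trans (by omega)

/-- Taking every `m`-th element of `U` in the order of an injective key gives a set `T` containing
at least a fraction `1 / m` of `U` and at most `d` elements of each convex `C ⊆ U` with
`|C| ≤ m * d`. -/
lemma exists_sparse_subset {α : Type*} [DecidableEq α] (U : Finset α) (key : α → ℕ)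
    (hinj : Set.InjOn key U) (m : ℕ) (hm : 0 < m) :
    ∃ T ⊆ U, U.card ≤ T.card * m ∧ ∀ C ⊆ U, ∀ d : ℕ, C.card ≤ m * d →
      (∀ x ∈ C, ∀ y ∈ U, ∀ z ∈ C, key x ≤ key y → key y ≤ key z → y ∈ C) →
      (T ∩ C).card ≤ d := by
  -- `r x` is the rank of `x`, starting from `0`.
  set r : α → ℕ := fun x => (U.filter (fun y => key y < key x)).card with hr
  have hmono : ∀ x ∈ U, ∀ y ∈ U, key x < key y → r x < r y := by
    intro x hx y hy hxy
    refine Finset.card_lt_card (Finset.ssubset_iff_of_subset ?_ |>.2 ⟨x, ?_, ?_⟩)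
    · intro w hw
      simp only [Finset.mem_filter] at hw ⊢
      exact ⟨hw.1, hw.2.trans hxy⟩
    · simp [hx, hxy]
    · simp
  have hrinj : Set.InjOn r U := by
    intro x hx y hy hxy
    rcases lt_trichotomy (key x) (key y) with h | h | h
    · exact absurd hxy (hmono x hx y hy h).ne
    · exact hinj hx hy h
    · exact absurd hxy (hmono y hy x hx h).ne'
  have himg : U.image r = Finset.range U.card := by
    refine Finset.eq_of_subset_of_card_le ?_ ?_
    · intro t ht
      obtain ⟨x, hx, rfl⟩ := Finset.mem_image.1 ht
      refine Finset.mem_range.2 (Finset.card_lt_card ?_)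
      exact (Finset.ssubset_iff_of_subset (Finset.filter_subset _ _)).2 ⟨x, hx, by simp⟩
    · rw [Finset.card_image_of_injOn hrinj, Finset.card_range]
  refine ⟨U.filter (fun x => m ∣ r x), Finset.filter_subset _ _, ?_, ?_⟩
  · -- The blocks `[r x, r x + m)` for selected `x` cover all ranks.
    have hcov : Finset.range U.card ⊆
        (U.filter (fun x => m ∣ r x)).biUnion (fun x => Finset.Ico (r x) (r x + m)) := by
      intro t ht
      have hmod := Nat.div_add_mod t m
      have hlt := Nat.mod_lt t hm
      have : m * (t / m) ∈ U.image r := by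
        rw [himg, Finset.mem_range]
        have := Finset.mem_range.1 ht
        omega
      obtain ⟨x, hx, hrx⟩ := Finset.mem_image.1 this
      refine Finset.mem_biUnion.2 ⟨x, Finset.mem_filter.2 ⟨hx, hrx ▸ dvd_mul_right _ _⟩, ?_⟩
      rw [Finset.mem_Ico]
      omega
    calc U.card = (Finset.range U.card).card := (Finset.card_range _).symm
      _ ≤ _ := Finset.card_le_card hcov
      _ ≤ _ := Finset.card_biUnion_le_card_mul _ _ _ (fun x _ => by simp)
  · intro C hCU d hd hconv
    rcases C.eq_empty_or_nonempty with rfl | hne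
    · simp
    obtain ⟨c, hc, hmin⟩ := Finset.exists_min_image C key hne
    -- The ranks of elements of `C` lie in an interval of length `|C|` starting at the least one.
    have hrange : ∀ x ∈ C, r x ∈ Finset.Ico (r c) (r c + m * d) := by
      intro x hx
      rw [Finset.mem_Ico]
      constructor
      · refine Finset.card_le_card fun w hw => ?_
        simp only [Finset.mem_filter] at hw ⊢
        exact ⟨hw.1, hw.2.trans_le (hmin x hx)⟩
      · have hsub : U.filter (fun y => key y < key x) ⊆
            U.filter (fun y => key y < key c) ∪ C.erase x := by
          intro w hw
          simp only [Finset.mem_filter, Finset.mem_union, Finset.mem_erase] at hw ⊢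
          rcases lt_or_ge (key w) (key c) with h | h
          · exact Or.inl ⟨hw.1, h⟩
          · refine Or.inr ⟨?_, hconv c hc w hw.1 x hx h hw.2.le⟩
            rintro rfl
            exact lt_irrefl _ hw.2
        have h1 := (Finset.card_le_card hsub).trans (Finset.card_union_le _ _)
        have h2 := Finset.card_erase_lt_of_mem hx
        simp only [hr]
        omega
    refine le_trans ?_ (card_multiples_Ico_le m hm (r c) d)
    refine Finset.card_le_card_of_injOn r ?_ ?_
    · intro x hx
      simp only [Finset.coe_inter, Finset.coe_filter, Set.mem_inter_iff, Set.mem_ofPred_eq,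
        Finset.mem_coe] at hx
      simp only [Finset.coe_filter, Set.mem_ofPred_eq]
      exact ⟨hrange x hx.2, hx.1.2⟩
    · intro x hx y hy hxy
      simp only [Finset.coe_inter, Set.mem_inter_iff, Finset.mem_coe] at hx hy
      exact hrinj (hCU hx.2) (hCU hy.2) hxy


/-- Claim: turning an almost-feasible solution into a feasible one.
The partitions `P₁,…,P_ρ` of `U'` are given by labeling functions `f 1, …, f ρ` (the
classes of `P_h` are the fibers of `f h` on `U'`); `P_{h+1}` refines `P_h`.
If every class of `P_h` has at most `64·d_h·(log₂ n)³` elements, then there is a subset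
`U'' ⊆ U'` with `|U''| ≥ |U'|/(256·(log₂ n)⁴)` such that every class of `P_h` contains at
most `d_h` elements of `U''`. -/
theorem statement16 {α : Type*} [DecidableEq α]
    (n ρ : ℕ) (hn : 2 ≤ n) (hρ : 1 ≤ ρ)
    (d : ℕ → ℕ) (hd2 : ∀ h, 1 ≤ h → h ≤ ρ → 2 ≤ d h)
    (hmono : ∀ h, 1 ≤ h → h < ρ → d (h + 1) ≤ d h)
    (U' : Finset α) (f : ℕ → α → ℕ)
    (hrefine : ∀ h, 1 ≤ h → h < ρ → ∀ a b : α,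
      f (h + 1) a = f (h + 1) b → f h a = f h b)
    (hclass : ∀ h, 1 ≤ h → h ≤ ρ → ∀ y : ℕ,
      ((U'.filter (fun x => f h x = y)).card : ℝ) ≤
        64 * (d h : ℝ) * (Real.logb 2 n) ^ 3) :
    ∃ U'' ⊆ U', (U'.card : ℝ) / (256 * (Real.logb 2 n) ^ 4) ≤ (U''.card : ℝ) ∧
      ∀ h, 1 ≤ h → h ≤ ρ → ∀ y : ℕ,
        (U''.filter (fun x => f h x = y)).card ≤ d h := by
  obtain ⟨key, hinj, hconv⟩ := exists_convex_key ρ hρ U' f hrefine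
  have hL : 1 ≤ Real.logb 2 n := by
    rw [Real.le_logb_iff_rpow_le (by norm_num) (by positivity)]
    simpa using (by exact_mod_cast hn : (2 : ℝ) ≤ n)
  set L := Real.logb 2 n with hLdef
  have hL3 : 1 ≤ L ^ 3 := one_le_pow₀ hL
  have hL4 : L ^ 3 ≤ L ^ 4 := pow_le_pow_right₀ hL (by norm_num)
  set m := ⌈64 * L ^ 3⌉₊ with hmdef
  have hmge : 64 * L ^ 3 ≤ m := Nat.le_ceil _
  have hm : 0 < m := Nat.ceil_pos.2 (by positivity)
  have hmle : (m : ℝ) ≤ 256 * L ^ 4 := by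
    have := Nat.ceil_lt_add_one (show 0 ≤ 64 * L ^ 3 by positivity)
    linarith
  obtain ⟨T, hTU, hcard, hT⟩ := exists_sparse_subset U' key hinj m hm
  refine ⟨T, hTU, ?_, ?_⟩
  · rw [div_le_iff₀ (by positivity)]
    calc (U'.card : ℝ) ≤ T.card * m := by exact_mod_cast hcard
      _ ≤ _ := by gcongr
  · intro h h1 h2 y
    have hle : (U'.filter (fun x => f h x = y)).card ≤ m * d h := by
      have h3 := hclass h h1 h2 y
      have h4 : (64 * L ^ 3) * (d h : ℝ) ≤ m * d h := by gcongr
      have h5 : ((U'.filter (fun x => f h x = y)).card : ℝ) ≤ (m : ℝ) * d h := by linarith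
      exact_mod_cast h5
    have key_bound := hT _ (Finset.filter_subset _ _) (d h) hle (by
      intro a ha b hb c hc hab hbc
      simp only [Finset.mem_filter] at ha hc ⊢
      exact ⟨hb, (hconv h h1 h2 a ha.1 b hb c hc.1 hab hbc (ha.2.trans hc.2.symm)).trans ha.2⟩)
    rwa [Finset.inter_filter, Finset.inter_eq_left.2 hTU] at key_bound
end
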